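/- Let n ≥ 7 and 1 ≤ k ≤ n-2 be integers. Let t_{n,k} ∈ (0,1) be the unique zero of f_{n,k} and set g(t) := ₂F₁((n-2)/4, (n-2)/4; k/2; t²), which is the function g_{n,k,α} with α = (2-n)/2. Then g'(t_{n,k})/g(t_{n,k}) > ((n-2)·t_{n,k} - (k-1)·t_{n,k}⁻¹)/(1 - t_{n,k}²); that is, (2-n)/2 ∈ A_{n,k}. (This inequality is the Caffarelli–Jerison–Kenig strict stability criterion for the homogeneous O(n-k)×O(k)-invariant one-phase cone U_{n,k}, and constitutes the analytic content of the strict stability assertion of the main theorem for n ≥ 7.) -/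

import Mathlib

/-!
Put `N = n - 2`, `s = t²`, `G(s) = ₂F₁(N/4, N/4; k/2; s)`, `f(s) = ₂F₁((N+1)/2, -1/2; k/2; s)` and
let `s₀ = t₀²` be the zero of `f`. Since `G > 0`, the claim is equivalent to
`(N s₀ - (k - 1)) G(s₀) < 2 s₀ (1 - s₀) G'(s₀)`.

*Lower bound for `G'/G`* (`barrier`). The function `2s(1-s)G'/G` solves a Riccati equation with
initial value `0`. A polynomial `ψ(s) = A s + B s² + C s³ + E s⁴` that is a strict subsolution of
this equation on `[0, s₀]` therefore satisfies `ψ G < 2s(1-s)G'` at `s₀`. Taking the linear `ψ`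
with `ψ(s₀) = N s₀ - (k - 1)` settles the claim as soon as
`N²/4 · s₀(1-s₀) - N s₀ + (k-1) > 0` (`generic`), a condition that is inherited by smaller `s₀`
(`E_pos`).

*Upper bound for `s₀`* (`fzero_le`). A Sturm comparison of `f` with
`v(s) = (1-s)^{1/4} - x^{1/4}`, which is a strict subsolution of the equation of `f` whenever
`x < (2(N-k)+1) (2N+3)³ / (27 (N+1)⁴)`, gives `s₀ ≤ 1 - (2(N-k)+1) (2N+3)³ / (27 (N+1)⁴)`.

Inserting this bound, the condition of `generic` becomes concave in `j = N - k`, so it only has to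
be verified at the ends of a range of `j`: this covers all `k` for `N ≥ 10`, all `k < N` for
`N = 7, 8, 9`, and `2 ≤ k ≤ 5` for `N = 6`. The ten remaining pairs `(N, k)`, namely
`N = 5`, `(6,1)`, `(6,6)`, `(7,7)`, `(8,8)`, `(9,9)`, are handled by explicit polynomials `ψ` of
degree at most `4` lying above `N s - (k - 1)`. For `N = 5` the bound on `s₀` comes from a partial
sum of the series of `f`, all of whose coefficients after the first are nonpositive
(`zero_le_of_partial_sum`). The polynomial inequalities on an interval `[a, b]` follow by writing
the polynomial as a nonnegative combination of the Bernstein products `(s-a)^i (b-s)^j`.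
-/

/-- The Gauss hypergeometric function `₂F₁(a,b;c;s)`, defined by its power series. -/
noncomputable def hyp2F1 (a b c s : ℝ) : ℝ :=
  ∑' m : ℕ, ((ascPochhammer ℝ m).eval a * (ascPochhammer ℝ m).eval b)
    / ((ascPochhammer ℝ m).eval c * (m.factorial : ℝ)) * s ^ m

/-- `f_{n,k}(t) := ₂F₁((n-1)/2, -1/2; k/2; t²)`. -/
noncomputable def fnk (n k : ℕ) (t : ℝ) : ℝ :=
  hyp2F1 (((n : ℝ) - 1) / 2) (-1 / 2) ((k : ℝ) / 2) (t ^ 2)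

/-- `g(t) := g_{n,k,(2-n)/2}(t) = ₂F₁((n-2)/4, (n-2)/4; k/2; t²)`. -/
noncomputable def gstab (n k : ℕ) (t : ℝ) : ℝ :=
  hyp2F1 (((n : ℝ) - 2) / 4) (((n : ℝ) - 2) / 4) ((k : ℝ) / 2) (t ^ 2)

open Filter Topology Set

/-! ### Power series on the unit interval and the hypergeometric equation -/

/-- Coefficient sequences whose power series converges absolutely on `(-1, 1)`. -/
def TameCoeff (c : ℕ → ℝ) : Prop :=
  ∀ r : ℝ, 0 < r → r < 1 → Summable fun m => |c m| * r ^ m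

/-- The sum of the power series with coefficients `c`. -/
noncomputable def pser (c : ℕ → ℝ) (s : ℝ) : ℝ := ∑' m, c m * s ^ m

/-- Coefficients of the termwise derivative of the power series with coefficients `c`. -/
def dcoeff (c : ℕ → ℝ) (m : ℕ) : ℝ := ((m : ℝ) + 1) * c (m + 1)

lemma TameCoeff.hasSum {c : ℕ → ℝ} (hc : TameCoeff c) {s : ℝ} (hs : |s| < 1) :
    HasSum (fun m => c m * s ^ m) (pser c s) := by
  have : Summable fun m => c m * s ^ m := by
    refine Summable.of_norm_bounded (hc ((|s| + 1) / 2) (by positivity) (by linarith)) fun m => ?_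
    rw [Real.norm_eq_abs, abs_mul, abs_pow]
    gcongr
    linarith
  exact this.hasSum

/-- Convergence of the differentiated series at `r` by comparison with the original series at
`(r + 1) / 2`, the factor `m + 1` being absorbed by geometric decay. -/
lemma TameCoeff.dcoeff {c : ℕ → ℝ} (hc : TameCoeff c) : TameCoeff (dcoeff c) := by
  intro r hr0 hr1
  set q := (r + 1) / 2 with hq
  have hq0 : 0 < q := by positivity
  have hrq : r / q < 1 := by rw [div_lt_one hq0]; linarith
  have hlim : Tendsto (fun m : ℕ => (m : ℝ) ^ 1 * (r / q) ^ m) atTop (𝓝 0) :=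
    tendsto_pow_const_mul_const_pow_of_lt_one 1 (by positivity) hrq
  have hlim' := hlim.comp (tendsto_add_atTop_nat 1)
  have hev : ∀ᶠ m : ℕ in atTop, (((m + 1 : ℕ) : ℝ)) ^ 1 * (r / q) ^ (m + 1) < r :=
    hlim'.eventually (gt_mem_nhds hr0)
  have hs := (summable_nat_add_iff 1).2 (hc q hq0 (by linarith))
  refine Summable.of_norm_bounded_eventually_nat hs ?_
  filter_upwards [hev] with m hm
  have h1 : ((m : ℝ) + 1) * r ^ m ≤ q ^ (m + 1) := by
    have : (((m + 1 : ℕ) : ℝ)) ^ 1 * (r / q) ^ (m + 1)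
        = ((m : ℝ) + 1) * r ^ m * r / q ^ (m + 1) := by
      rw [div_pow, pow_succ r]; push_cast; ring
    rw [this, div_lt_iff₀ (by positivity)] at hm
    nlinarith
  rw [Real.norm_eq_abs, abs_mul, abs_abs, _root_.dcoeff, abs_mul, abs_of_nonneg (a := r ^ m) (by positivity),
    abs_of_nonneg (a := (m : ℝ) + 1) (by positivity)]
  calc ((m : ℝ) + 1) * |c (m + 1)| * r ^ m = |c (m + 1)| * (((m : ℝ) + 1) * r ^ m) := by ring
    _ ≤ _ := by gcongr

lemma TameCoeff.hasDerivAt {c : ℕ → ℝ} (hc : TameCoeff c) {s : ℝ} (hs : |s| < 1) :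
    HasDerivAt (pser c) (pser (_root_.dcoeff c) s) s := by
  set q := (|s| + 1) / 2 with hq
  have hq0 : 0 < q := by positivity
  have hq1 : q < 1 := by linarith
  have hsum : Summable fun m : ℕ => (m : ℝ) * |c m| * q ^ (m - 1) := by
    rw [← summable_nat_add_iff 1]
    refine (hc.dcoeff q hq0 hq1).congr fun m => ?_
    rw [_root_.dcoeff, abs_mul, abs_of_nonneg (a := (m : ℝ) + 1) (by positivity)]
    simp
  have key := hasDerivAt_tsum_of_isPreconnected (g := fun m (y : ℝ) => c m * y ^ m)
    (g' := fun m y => c m * (m * y ^ (m - 1))) (y₀ := 0) (y := s) (t := Ioo (-q) q) hsum isOpen_Ioo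
    isPreconnected_Ioo (fun m y _ => (hasDerivAt_pow m y).const_mul (c m)) ?_
    ⟨by linarith, hq0⟩ ?_ ?_
  · have h2 : HasSum (fun m : ℕ => c m * (m * s ^ (m - 1))) (pser (_root_.dcoeff c) s) := by
      rw [← hasSum_nat_add_iff' 1]
      have h := hc.dcoeff.hasSum hs
      simp only [Finset.range_one, Finset.sum_singleton, Nat.cast_zero, zero_mul, mul_zero, sub_zero]
      refine h.congr_fun fun m => ?_
      simp only [_root_.dcoeff, Nat.add_sub_cancel]; push_cast; ring
    rw [h2.tsum_eq] at key
    exact key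
  · intro m y hy
    have hy' : |y| ≤ q := abs_le.2 ⟨hy.1.le, hy.2.le⟩
    rw [Real.norm_eq_abs, abs_mul, abs_mul, abs_pow, Nat.abs_cast]
    calc |c m| * (m * |y| ^ (m - 1)) = m * |c m| * |y| ^ (m - 1) := by ring
      _ ≤ _ := by gcongr
  · exact (hc.hasSum (s := 0) (by simp)).summable
  · have := abs_lt.1 (show |s| < q by linarith)
    exact ⟨this.1, this.2⟩

lemma hasSum_shift {d e : ℕ → ℝ} {s S : ℝ} (h : HasSum (fun m => d m * s ^ m) S) (h0 : e 0 = 0)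
    (h1 : ∀ m, e (m + 1) = d m) : HasSum (fun m => e m * s ^ m) (s * S) := by
  rw [← hasSum_nat_add_iff' 1]
  simp only [Finset.range_one, Finset.sum_singleton, h0, zero_mul, sub_zero]
  refine (h.mul_left s).congr_fun fun m => ?_
  rw [h1, pow_succ]; ring

/-- If the coefficients satisfy the hypergeometric recursion, the sum `u` of the series solves the
Gauss equation `s(1-s)u'' + (γ - (a+b+1)s)u' - ab u = 0`. -/
lemma pser_ode {c : ℕ → ℝ} (hc : TameCoeff c) {a b γ : ℝ}
    (hrec : ∀ m : ℕ, ((m : ℝ) + 1) * (γ + m) * c (m + 1) = (a + m) * (b + m) * c m)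
    {s : ℝ} (hs : |s| < 1) :
    s * (1 - s) * pser (dcoeff (dcoeff c)) s + (γ - (a + b + 1) * s) * pser (dcoeff c) s
      - a * b * pser c s = 0 := by
  have h0 := hc.hasSum hs
  have h1 := hc.dcoeff.hasSum hs
  have h2 := hc.dcoeff.dcoeff.hasSum hs
  have e1 := hasSum_shift (e := fun m => (m : ℝ) * c m) h1 (by simp)
    (fun m => by simp [dcoeff])
  have e2 := hasSum_shift (e := fun m => (m : ℝ) * ((m + 1) * c (m + 1))) h2 (by simp)
    (fun m => by simp [dcoeff])
  have e3 := hasSum_shift (e := fun m => (m : ℝ) * (m - 1) * c m) e2 (by simp)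
    (fun m => by push_cast; ring)
  have tot := (((e2.sub e3).add (h1.mul_left γ)).sub (e1.mul_left (a + b + 1))).sub
    (h0.mul_left (a * b))
  have hz : (fun m : ℕ => (m : ℝ) * ((m + 1) * c (m + 1)) * s ^ m - (m : ℝ) * (m - 1) * c m * s ^ m
      + γ * (dcoeff c m * s ^ m) - (a + b + 1) * ((m : ℝ) * c m * s ^ m)
      - a * b * (c m * s ^ m)) = fun _ => 0 := by
    funext m
    rw [dcoeff]
    linear_combination s ^ m * hrec m
  rw [hz] at tot
  have := tot.unique hasSum_zero
  linear_combination this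

/-- The Taylor coefficients `(a)_m (b)_m / ((c)_m m!)` of `₂F₁(a, b; c; ·)`. -/
noncomputable def hcoef (a b c : ℝ) (m : ℕ) : ℝ :=
  ((ascPochhammer ℝ m).eval a * (ascPochhammer ℝ m).eval b)
    / ((ascPochhammer ℝ m).eval c * (m.factorial : ℝ))

lemma hyp2F1_eq (a b c : ℝ) : hyp2F1 a b c = pser (hcoef a b c) := rfl

lemma hcoef_zero (a b c : ℝ) : hcoef a b c 0 = 1 := by simp [hcoef]

lemma hcoef_succ (a b : ℝ) {c : ℝ} (hc : 0 < c) (m : ℕ) :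
    hcoef a b c (m + 1) = (a + m) * (b + m) / ((c + m) * (m + 1)) * hcoef a b c m := by
  have := ascPochhammer_pos m c hc
  have h2 : (m.factorial : ℝ) ≠ 0 := by positivity
  simp only [hcoef, ascPochhammer_succ_eval, Nat.factorial_succ]
  push_cast
  field_simp

lemma hcoef_tame (a b : ℝ) {c : ℝ} (hc : 0 < c) : TameCoeff (hcoef a b c) := by
  intro r hr0 hr1
  have hlim : Tendsto (fun m : ℕ => (a + m) * (b + m) / ((c + m) * (m + 1)) : ℕ → ℝ) atTop (𝓝 1) := by
    have h (u v : ℝ) : Tendsto (fun m : ℕ => (u + m) / (v + m) : ℕ → ℝ) atTop (𝓝 1) := by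
      have h1 : Tendsto (fun m : ℕ => v + (m : ℝ)) atTop atTop :=
        tendsto_atTop_add_const_left _ _ tendsto_natCast_atTop_atTop
      have h2 : Tendsto (fun m : ℕ => 1 + (u - v) / (v + (m : ℝ))) atTop (𝓝 (1 + 0)) :=
        tendsto_const_nhds.add (h1.const_div_atTop _)
      rw [add_zero] at h2
      refine h2.congr' ?_
      filter_upwards [h1.eventually_gt_atTop 0] with m hm
      field_simp; ring
    have := (h a c).mul (h b 1)
    rw [mul_one] at this
    refine this.congr fun m => ?_
    rw [div_mul_div_comm, add_comm (1 : ℝ)]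
  have hlim2 : Tendsto (fun m : ℕ => |(a + m) * (b + m) / ((c + m) * (m + 1))| * r : ℕ → ℝ) atTop
      (𝓝 (|1| * r)) := hlim.abs.mul_const r
  rw [abs_one, one_mul] at hlim2
  have hev := hlim2.eventually (gt_mem_nhds (show r < (r + 1) / 2 by linarith))
  refine summable_of_ratio_norm_eventually_le (r := (r + 1) / 2) (by linarith) ?_
  filter_upwards [hev] with m hm
  rw [hcoef_succ a b hc, Real.norm_eq_abs, Real.norm_eq_abs, abs_mul, abs_mul, abs_mul, abs_mul, abs_abs, abs_abs,
    abs_of_nonneg (a := r ^ (m+1)) (by positivity), abs_of_nonneg (a := r ^ m) (by positivity), pow_succ]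
  have : 0 ≤ |hcoef a b c m| * r ^ m := by positivity
  nlinarith

/-- `₂F₁(a, b; c; ·)` is twice differentiable on `(-1, 1)` and solves the Gauss equation there;
`u1` and `u2` are its first two derivatives. -/
lemma hyp_sol (a b : ℝ) {c : ℝ} (hc : 0 < c) : ∃ u1 u2 : ℝ → ℝ,
    (∀ s, |s| < 1 → HasDerivAt (hyp2F1 a b c) (u1 s) s) ∧
    (∀ s, |s| < 1 → HasDerivAt u1 (u2 s) s) ∧
    (∀ s, |s| < 1 → s * (1 - s) * u2 s + (c - (a + b + 1) * s) * u1 s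
      - a * b * hyp2F1 a b c s = 0) := by
  have ht := hcoef_tame a b hc
  refine ⟨pser (dcoeff (hcoef a b c)), pser (dcoeff (dcoeff (hcoef a b c))), fun s hs => ?_,
    fun s hs => ht.dcoeff.hasDerivAt hs, fun s hs => ?_⟩
  · exact ht.hasDerivAt hs
  · refine pser_ode ht (fun m => ?_) hs
    rw [hcoef_succ a b hc]
    have : c + m ≠ 0 := by positivity
    field_simp

lemma hyp_at_zero (a b c : ℝ) : hyp2F1 a b c 0 = 1 := by
  rw [hyp2F1_eq, pser, tsum_eq_single 0 (fun m hm => by simp [hm])]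
  simp [hcoef_zero]

lemma hyp_pos (a : ℝ) {c : ℝ} (hc : 0 < c) {s : ℝ} (hs0 : 0 ≤ s) (hs1 : s < 1) :
    0 < hyp2F1 a a c s := by
  have h := (hcoef_tame a a hc).hasSum (s := s) (by rwa [abs_of_nonneg hs0])
  have hnn : ∀ m, 0 ≤ hcoef a a c m * s ^ m := fun m => by
    have := ascPochhammer_pos m c hc
    refine mul_nonneg (div_nonneg (mul_self_nonneg _) (by positivity)) (by positivity)
  have h1 := le_hasSum h 0 (fun m _ => hnn m)
  rw [hcoef_zero] at h1
  rw [hyp2F1_eq]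
  linarith [h1, pow_zero s]

/-! ### Comparison arguments: Riccati barrier and Sturm comparison -/

lemma nonneg_of_deriv_pos_at_zeros {D D' : ℝ → ℝ} {b : ℝ} (h0 : D 0 = 0)
    (hd : ∀ s ∈ Icc 0 b, HasDerivAt D (D' s) s)
    (hp : ∀ s ∈ Icc 0 b, D s = 0 → 0 < D' s) : ∀ s ∈ Icc 0 b, 0 ≤ D s := by
  have := image_le_of_deriv_right_lt_deriv_boundary' (f := fun _ => (0 : ℝ)) (f' := fun _ => 0)
    (a := 0) (b := b) (B := D) (B' := D') continuousOn_const
    (fun x _ => (hasDerivAt_const x (0 : ℝ)).hasDerivWithinAt) h0.ge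
    (fun x hx => (hd x hx).continuousAt.continuousWithinAt)
    (fun x hx => (hd x (Ico_subset_Icc_self hx)).hasDerivWithinAt)
    (fun x hx h => hp x (Ico_subset_Icc_self hx) h.symm)
  exact fun s hs => this hs

/-- The endpoint value cannot vanish: with a positive derivative there, `D` would be negative just
before. -/
lemma pos_of_deriv_pos_at_zeros {D D' : ℝ → ℝ} {b : ℝ} (hb : 0 < b) (h0 : D 0 = 0)
    (hd : ∀ s ∈ Icc 0 b, HasDerivAt D (D' s) s)
    (hp : ∀ s ∈ Icc 0 b, D s = 0 → 0 < D' s) : 0 < D b := by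
  have hnn := nonneg_of_deriv_pos_at_zeros h0 hd hp
  have hbm : b ∈ Icc 0 b := ⟨hb.le, le_rfl⟩
  refine (hnn b hbm).lt_of_ne' fun hz => ?_
  have hsl := (hasDerivAt_iff_tendsto_slope.1 (hd b hbm)).eventually (lt_mem_nhds (hp b hbm hz))
  have hsl' := hsl.filter_mono (nhdsWithin_mono b (show Iio b ⊆ {b}ᶜ from fun x hx => ne_of_lt hx))
  have hpos : ∀ᶠ x in 𝓝[<] b, 0 < x := nhdsWithin_le_nhds (lt_mem_nhds hb)
  obtain ⟨x, ⟨hx1, hx2⟩, hx3⟩ := ((hsl'.and hpos).and self_mem_nhdsWithin).exists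
  have hx3' : x < b := hx3
  rw [slope_def_field, hz, div_pos_iff] at hx1
  have := hnn x ⟨hx2.le, hx3'.le⟩
  rcases hx1 with h | h
  · linarith [h.2]
  · linarith [h.1]

/-- With `ψ(s) = A s + B s² + C s³ + E s⁴`, the function `D = 2s(1-s)G' - ψ G` vanishes at `0`, and at
each of its zeros in `[0, s₀]` the Gauss equation for `G` gives `2(1-s)D' = ρ G`, where `ρ` is the
expression in `hρ`. Positivity of `ρ` thus forces `D(s₀) > 0`. -/
lemma barrier {N k s₀ : ℝ} (hk : 0 < k) (hs0 : 0 < s₀) (hs1 : s₀ < 1) (A B C E : ℝ)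
    (hρ : ∀ s ∈ Icc 0 s₀, 0 < N ^ 2 / 4 * (1 - s)
      + (2 - k + (N - 2) * s) * (A + B * s + C * s ^ 2 + E * s ^ 3)
      - s * (A + B * s + C * s ^ 2 + E * s ^ 3) ^ 2
      - 2 * (1 - s) * (A + 2 * B * s + 3 * C * s ^ 2 + 4 * E * s ^ 3))
    {G₁ : ℝ} (hG : HasDerivAt (hyp2F1 (N / 4) (N / 4) (k / 2)) G₁ s₀) :
    (A * s₀ + B * s₀ ^ 2 + C * s₀ ^ 3 + E * s₀ ^ 4) * hyp2F1 (N / 4) (N / 4) (k / 2) s₀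
      < 2 * s₀ * (1 - s₀) * G₁ := by
  obtain ⟨u1, u2, h1, h2, hode⟩ := hyp_sol (N / 4) (N / 4) (c := k / 2) (by positivity)
  set G := hyp2F1 (N / 4) (N / 4) (k / 2) with hGdef
  have habs : ∀ s ∈ Icc 0 s₀, |s| < 1 := fun s hs => by
    rw [abs_of_nonneg hs.1]; exact hs.2.trans_lt hs1
  rw [hG.unique (h1 s₀ (habs _ ⟨hs0.le, le_rfl⟩)), ← sub_pos]
  refine pos_of_deriv_pos_at_zeros
    (D := fun s => 2 * s * (1 - s) * u1 s - (A * s + B * s ^ 2 + C * s ^ 3 + E * s ^ 4) * G s)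
    (D' := fun s => (2 * (1 - 2 * s) * u1 s + 2 * s * (1 - s) * u2 s)
      - ((A + 2 * B * s + 3 * C * s ^ 2 + 4 * E * s ^ 3) * G s
        + (A * s + B * s ^ 2 + C * s ^ 3 + E * s ^ 4) * u1 s)) hs0 (by simp) ?_ ?_
  · intro s hs
    have e1 : HasDerivAt (fun s : ℝ => 2 * s * (1 - s)) (2 * (1 - 2 * s)) s := by
      have := ((hasDerivAt_id s).const_mul 2).mul ((hasDerivAt_id s).const_sub 1)
      refine this.congr_deriv ?_
      simp only [id]; ring
    have e2 : HasDerivAt (fun s : ℝ => A * s + B * s ^ 2 + C * s ^ 3 + E * s ^ 4)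
        (A + 2 * B * s + 3 * C * s ^ 2 + 4 * E * s ^ 3) s := by
      have := ((((hasDerivAt_id s).const_mul A).add ((hasDerivAt_pow 2 s).const_mul B)).add
        ((hasDerivAt_pow 3 s).const_mul C)).add ((hasDerivAt_pow 4 s).const_mul E)
      refine this.congr_deriv ?_
      push_cast; ring
    exact (e1.mul (h2 s (habs s hs))).sub (e2.mul (h1 s (habs s hs)))
  · intro s hs hD
    have hl := hρ s hs
    have ho := hode s (habs s hs)
    have hGp : 0 < G s := hyp_pos _ (by positivity) hs.1 (hs.2.trans_lt hs1)
    have hx : 0 < 1 - s := by linarith [hs.2]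
    -- The Gauss equation degenerates at `s = 0`, where it gives `G'(0)` directly.
    rcases hs.1.eq_or_lt with h | h
    · subst h
      have hG0 : G 0 = 1 := hyp_at_zero _ _ _
      rw [hG0] at ho ⊢
      have hk2 : k * u1 0 = N ^ 2 / 8 := by linarith
      have : k * (2 * u1 0 - A) > 0 := by nlinarith
      have := (mul_pos_iff_of_pos_left hk).1 this
      simp only [mul_zero, sub_zero]
      norm_num
      linarith
    · have key : 2 * (1 - s) * ((2 * (1 - 2 * s) * u1 s + 2 * s * (1 - s) * u2 s)
          - ((A + 2 * B * s + 3 * C * s ^ 2 + 4 * E * s ^ 3) * G s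
          + (A * s + B * s ^ 2 + C * s ^ 3 + E * s ^ 4) * u1 s)) =
          (N ^ 2 / 4 * (1 - s)
      + (2 - k + (N - 2) * s) * (A + B * s + C * s ^ 2 + E * s ^ 3)
      - s * (A + B * s + C * s ^ 2 + E * s ^ 3) ^ 2
      - 2 * (1 - s) * (A + 2 * B * s + 3 * C * s ^ 2 + 4 * E * s ^ 3)) * G s := by
        refine mul_left_cancel₀ h.ne' ?_
        linear_combination (2 - k + (N - 2) * s - (A * s + B * s ^ 2 + C * s ^ 3 + E * s ^ 4)) * hD
          + 4 * s * (1 - s) * ho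
      have hpos := mul_pos hl hGp
      rw [← key] at hpos
      exact (mul_pos_iff_of_pos_left (by linarith)).1 hpos

/-- Sturm comparison for `f = ₂F₁((N+1)/2, -1/2; k/2; ·)`: a strict subsolution `v` of the equation of
`f` that reaches `0` at `s₁` with negative slope forces `f` to take a nonpositive value on
`[0, s₁]`. Otherwise `s(1-s)(f v' - f' v)`, which starts at `0` and increases strictly through each
of its zeros, would be negative at `s₁`. -/
lemma sturm {N k s₁ : ℝ} (hk : 0 < k) (hs0 : 0 < s₁) (hs1 : s₁ < 1) {v v1 v2 : ℝ → ℝ}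
    (hv : ∀ s ∈ Icc 0 s₁, HasDerivAt v (v1 s) s) (hv1 : ∀ s ∈ Icc 0 s₁, HasDerivAt v1 (v2 s) s)
    (hR : ∀ s ∈ Icc 0 s₁, 0 < s * (1 - s) * v2 s + (k / 2 - (N / 2 + 1) * s) * v1 s
      + (N + 1) / 4 * v s)
    (hvz : v s₁ = 0) (hvn : v1 s₁ < 0) :
    ∃ s ∈ Icc 0 s₁, hyp2F1 ((N + 1) / 2) (-1 / 2) (k / 2) s ≤ 0 := by
  by_contra! hpos
  obtain ⟨u1, u2, h1, h2, hode⟩ := hyp_sol ((N + 1) / 2) (-1 / 2) (c := k / 2) (by positivity)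
  set f := hyp2F1 ((N + 1) / 2) (-1 / 2) (k / 2) with hfdef
  have habs : ∀ s ∈ Icc 0 s₁, |s| < 1 := fun s hs => by
    rw [abs_of_nonneg hs.1]; exact hs.2.trans_lt hs1
  have hm : s₁ ∈ Icc 0 s₁ := ⟨hs0.le, le_rfl⟩
  have key := nonneg_of_deriv_pos_at_zeros (b := s₁)
    (D := fun s => s * (1 - s) * (f s * v1 s - u1 s * v s))
    (D' := fun s => (1 - 2 * s) * (f s * v1 s - u1 s * v s)
      + s * (1 - s) * ((u1 s * v1 s + f s * v2 s) - (u2 s * v s + u1 s * v1 s))) (by simp) ?_ ?_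
      s₁ hm
  · simp only [hvz, mul_zero, sub_zero] at key
    have : s₁ * (1 - s₁) * (f s₁ * v1 s₁) < 0 :=
      mul_neg_of_pos_of_neg (mul_pos hs0 (by linarith))
        (mul_neg_of_pos_of_neg (hpos s₁ hm) hvn)
    linarith
  · intro s hs
    have e1 : HasDerivAt (fun s : ℝ => s * (1 - s)) (1 - 2 * s) s := by
      have := (hasDerivAt_id s).mul ((hasDerivAt_id s).const_sub 1)
      refine this.congr_deriv ?_
      simp only [id]; ring
    exact e1.mul (((h1 s (habs s hs)).mul (hv1 s hs)).sub ((h2 s (habs s hs)).mul (hv s hs)))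
  · intro s hs hD
    have hr := hR s hs
    have ho := hode s (habs s hs)
    have hf := hpos s hs
    have hx : 0 < 1 - s := by linarith [hs.2]
    have hrf := mul_pos hr hf
    rcases hs.1.eq_or_lt with h | h
    · subst h
      have hf0 : f 0 = 1 := hyp_at_zero _ _ _
      rw [hf0] at ho ⊢
      have hu : k * u1 0 = - (N + 1) / 2 := by linarith
      have e : k * (v1 0 - u1 0 * v 0) = k * v1 0 + (N + 1) / 2 * v 0 := by
        linear_combination (-v 0) * hu
      have : 0 < k * (v1 0 - u1 0 * v 0) := by rw [e]; linarith
      have := (mul_pos_iff_of_pos_left hk).1 this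
      norm_num
      linarith
    · have hW : f s * v1 s - u1 s * v s = 0 :=
        (mul_eq_zero.1 hD).resolve_left (mul_pos h hx).ne'
      refine hrf.trans_eq ?_
      linear_combination (k / 2 - (N / 2 + 1) * s - (1 - 2 * s)) * hW + v s * ho

/-! ### Upper bounds for the zero of `f` -/

/-- The minimum of `p + q u⁴ - M u³` is `p - 27 M⁴ / (256 q³)`, attained at `u = 3M / (4q)`. -/
lemma quartic_pos {p q M u : ℝ} (hq : 0 < q) (h : 27 * M ^ 4 < 256 * p * q ^ 3) :
    0 < p + q * u ^ 4 - M * u ^ 3 := by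
  set z := M / q with hz
  have hM : M = z * q := by rw [hz]; field_simp
  have h1 : 27 * z ^ 4 * q < 256 * p := by
    rw [hM] at h
    have h3 : 0 < q ^ 3 := by positivity
    nlinarith
  -- `u⁴ - z u³ + 27 z⁴ / 256` has a double root at `3z/4`; this is its factorization.
  have h2 : 0 ≤ (u - 3 / 4 * z) ^ 2 * ((u + z / 4) ^ 2 + z ^ 2 / 8) * q := by positivity
  rw [hM]
  nlinarith

/-- Sturm comparison with `v(s) = (1-s)^{1/4} - x^{1/4}`. In the variable `u = (1-s)^{1/4}` the
subsolution inequality is positivity of a quartic polynomial. -/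
lemma fzero_le {N k s₀ : ℝ} (hk : 0 < k) (hkN : k ≤ N) (hs0 : 0 < s₀) (hs1 : s₀ < 1)
    (hpos : ∀ s ∈ Ico 0 s₀, 0 < hyp2F1 ((N + 1) / 2) (-1 / 2) (k / 2) s) :
    s₀ ≤ 1 - (2 * (N - k) + 1) * ((2 * N + 3) ^ 3 / (27 * (N + 1) ^ 4)) := by
  by_contra! hlt
  have hN : 0 < N := hk.trans_le hkN
  obtain ⟨x, hx0, hx1⟩ : ∃ x, 1 - s₀ < x ∧
      x < min 1 ((2 * (N - k) + 1) * ((2 * N + 3) ^ 3 / (27 * (N + 1) ^ 4))) :=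
    exists_between (lt_min (by linarith) (by linarith))
  have hx1' : x < 1 := hx1.trans_le (min_le_left _ _)
  have hx2 := hx1.trans_le (min_le_right _ _)
  have hxp : 0 < x := by linarith
  rw [← mul_div_assoc, lt_div_iff₀ (by positivity)] at hx2
  set C := x ^ (1 / 4 : ℝ) with hC
  have hCp : 0 < C := Real.rpow_pos_of_pos hxp _
  have hpow (y : ℝ) (hy : 0 < y) : (y ^ (1 / 4 : ℝ)) ^ 4 = y := by
    rw [← Real.rpow_natCast, ← Real.rpow_mul hy.le]; norm_num
  have hC4 : C ^ 4 = x := hpow x hxp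
  set u : ℝ → ℝ := fun s => (1 - s) ^ (1 / 4 : ℝ) with hu
  have hud : ∀ s ∈ Icc 0 (1 - x), HasDerivAt u (-(1 / 4) * u s / (1 - s)) s := by
    intro s hs
    have hy : 0 < 1 - s := by linarith [hs.2]
    have := ((hasDerivAt_id s).const_sub 1).rpow_const (p := 1 / 4) (Or.inl hy.ne')
    refine this.congr_deriv ?_
    simp only [id]
    rw [Real.rpow_sub_one hy.ne', hu]
    ring
  suffices h : ∃ s ∈ Icc 0 (1 - x), hyp2F1 ((N + 1) / 2) (-1 / 2) (k / 2) s ≤ 0 by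
    obtain ⟨s, hs, hsf⟩ := h
    exact absurd (hpos s ⟨hs.1, by linarith [hs.2]⟩) (not_lt.2 hsf)
  refine sturm (N := N) hk (s₁ := 1 - x) (by linarith) (by linarith)
    (v := fun s => u s - C) (v1 := fun s => -(1 / 4) * u s / (1 - s))
    (v2 := fun s => -(3 / 16) * u s / (1 - s) ^ 2)
    (fun s hs => (hud s hs).sub_const C) ?_ ?_ ?_ ?_
  · intro s hs
    have hy : 0 < 1 - s := by linarith [hs.2]
    have := ((hud s hs).const_mul (-(1 / 4))).div ((hasDerivAt_id s).const_sub 1) hy.ne'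
    refine this.congr_deriv ?_
    simp only [id]
    field_simp; ring
  · intro s hs
    have hy : 0 < 1 - s := by linarith [hs.2]
    have hup : 0 < u s := Real.rpow_pos_of_pos hy _
    have hu4 : u s ^ 4 = 1 - s := hpow _ hy
    have hq := quartic_pos (p := 2 * (N - k) + 1) (q := 2 * N + 3) (M := 4 * (N + 1) * C) (u := u s)
      (by linarith) (by rw [mul_pow, hC4]; nlinarith)
    have e : 16 * (1 - s) * (s * (1 - s) * (-(3 / 16) * u s / (1 - s) ^ 2)
        + (k / 2 - (N / 2 + 1) * s) * (-(1 / 4) * u s / (1 - s)) + (N + 1) / 4 * (u s - C))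
        = u s * (2 * (N - k) + 1 + (2 * N + 3) * u s ^ 4 - 4 * (N + 1) * C * u s ^ 3) := by
      have : u s * (4 * (N + 1) * C * u s ^ 3) = 4 * (N + 1) * C * (1 - s) := by
        rw [← hu4]; ring
      rw [mul_sub (u s), this, hu4]
      field_simp
      ring
    have h3 := mul_pos hup hq
    rw [← e] at h3
    exact (mul_pos_iff_of_pos_left (by linarith)).1 h3
  · simp [hu, hC]
  · have hup : 0 < u (1 - x) := Real.rpow_pos_of_pos (by linarith) _
    rw [sub_sub_cancel, neg_mul, neg_div]
    have : 0 < 1 / 4 * u (1 - x) / x := by positivity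
    linarith

/-- The coefficients of `f` after the constant one are nonpositive, so `f` lies below each partial sum
of its series, and every nonempty partial sum is nonincreasing on `[0, ∞)`. -/
lemma zero_le_of_partial_sum {N k s₀ s₁ : ℝ} (hN : 0 ≤ N) (hk : 0 < k) (hs0 : 0 < s₀)
    (hs1 : s₀ < 1) (h1 : 0 < s₁) (hz : hyp2F1 ((N + 1) / 2) (-1 / 2) (k / 2) s₀ = 0) (M : ℕ)
    (hM : ∑ m ∈ Finset.range M, hcoef ((N + 1) / 2) (-1 / 2) (k / 2) m * s₁ ^ m < 0) :
    s₀ ≤ s₁ := by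
  by_contra! hlt
  have hk2 : 0 < k / 2 := by positivity
  have hc : ∀ m : ℕ, hcoef ((N + 1) / 2) (-1 / 2) (k / 2) (m + 1) ≤ 0 := by
    intro m
    induction m with
    | zero =>
      rw [hcoef_succ _ _ hk2, hcoef_zero]
      have : 0 ≤ ((N + 1) / 2 + (0 : ℕ)) * (1 / 2) / ((k / 2 + (0 : ℕ)) * ((0 : ℕ) + 1)) := by
        push_cast; positivity
      push_cast at this ⊢
      linarith [show (((N + 1) / 2 + 0) * (-1 / 2 + 0) / ((k / 2 + 0) * (0 + 1)) * 1 : ℝ)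
        = - (((N + 1) / 2 + 0) * (1 / 2) / ((k / 2 + 0) * (0 + 1))) by ring]
    | succ m ih =>
      rw [hcoef_succ _ _ hk2]
      refine mul_nonpos_of_nonneg_of_nonpos ?_ ih
      have : (0 : ℝ) ≤ -1 / 2 + ((m + 1 : ℕ) : ℝ) := by push_cast; linarith [m.cast_nonneg (α := ℝ)]
      positivity
  have hs := (hcoef_tame ((N + 1) / 2) (-1 / 2) hk2).hasSum (s := s₀) (by rwa [abs_of_pos hs0])
  rw [← hyp2F1_eq, hz] at hs
  have hle : 0 ≤ ∑ m ∈ Finset.range M, hcoef ((N + 1) / 2) (-1 / 2) (k / 2) m * s₀ ^ m := by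
    have h := sum_le_hasSum (Finset.range M) (f := fun m => -(hcoef ((N + 1) / 2) (-1 / 2) (k / 2) m * s₀ ^ m)) (a := -0) ?_ hs.neg
    · rw [Finset.sum_neg_distrib] at h; linarith
    · intro m hm
      rcases m with _ | m
      · have : M = 0 := by simpa using hm
        simp [this] at hM
      · have := mul_nonpos_of_nonpos_of_nonneg (hc m) (pow_nonneg hs0.le (m + 1))
        linarith
  refine absurd (hle.trans (Finset.sum_le_sum fun m _ => ?_)) (not_le.2 hM)
  rcases m with _ | m
  · simp
  · exact mul_le_mul_of_nonpos_left (pow_le_pow_left₀ h1.le hlt.le _) (hc m)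

/-! ### The generic case -/

/-- The barrier `ψ(s) = A s` with `ψ(s₀) = N s₀ - (k - 1)`. -/
lemma generic {N k s₀ : ℝ} (hN : 0 < N) (hk : 1 ≤ k) (hs0 : 0 < s₀) (hs1 : s₀ < 1)
    (hE : 0 < N ^ 2 / 4 * s₀ * (1 - s₀) - N * s₀ + (k - 1))
    {G₁ : ℝ} (hG : HasDerivAt (hyp2F1 (N / 4) (N / 4) (k / 2)) G₁ s₀) :
    (N * s₀ - (k - 1)) * hyp2F1 (N / 4) (N / 4) (k / 2) s₀ < 2 * s₀ * (1 - s₀) * G₁ := by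
  obtain ⟨A, hA⟩ : ∃ A, A * s₀ = N * s₀ - (k - 1) :=
    ⟨(N * s₀ - (k - 1)) / s₀, div_mul_cancel₀ _ hs0.ne'⟩
  -- The expression of the barrier condition; it is affine in `s`, so its positivity on `[0, s₀]`
  -- only has to be seen at the two ends.
  set L : ℝ → ℝ := fun s => N ^ 2 / 4 * (1 - s) + (2 - k + (N - 2) * s) * A - s * A ^ 2
    - 2 * (1 - s) * A with hL
  have hLs : s₀ * L s₀ = N ^ 2 / 4 * s₀ * (1 - s₀) - N * s₀ + (k - 1) := by
    simp only [hL]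
    linear_combination -(A * s₀ + 1) * hA
  have hLs' : 0 < L s₀ := by
    rw [← hLs] at hE
    exact (mul_pos_iff_of_pos_left hs0).1 hE
  have hL0 : 0 < L 0 := by
    have e0 : L 0 = N ^ 2 / 4 - k * A := by simp only [hL]; ring
    have e1 : (1 - s₀) * L 0 = L s₀ + s₀ * A * (A - (N - k)) := by simp only [hL]; ring
    rcases le_or_gt A 0 with h | h
    · rw [e0]
      nlinarith [sq_pos_of_pos hN, mul_nonneg (zero_le_one.trans hk) (neg_nonneg.2 h)]
    rcases lt_or_ge A (N - k) with h' | h'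
    · rw [e0]
      nlinarith [sq_nonneg (N - 2 * k)]
    · have : 0 ≤ s₀ * A * (A - (N - k)) := mul_nonneg (by positivity) (by linarith)
      have h2 : 0 < (1 - s₀) * L 0 := by rw [e1]; linarith
      exact (mul_pos_iff_of_pos_left (by linarith)).1 h2
  have hb := barrier (N := N) (k := k) (by linarith) hs0 hs1 A 0 0 0 ?_ hG
  · rw [← hA]; simpa using hb
  · intro s hs
    have e : s₀ * L s = (s₀ - s) * L 0 + s * L s₀ := by simp only [hL]; ring
    have h2 : 0 < s₀ * L s := by
      rw [e]
      rcases hs.1.eq_or_lt with h | h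
      · rw [← h]; simpa using mul_pos hs0 hL0
      · have := mul_pos h hLs'
        have := mul_nonneg (sub_nonneg.2 hs.2) hL0.le
        linarith
    have h3 := (mul_pos_iff_of_pos_left hs0).1 h2
    simp only [hL] at h3
    refine h3.trans_eq ?_
    ring

/-- The condition of `generic` passes from `1 - x` to every smaller positive `s₀`: divided by `s`, the
left-hand side is a nonincreasing function of `s`. -/
lemma E_pos {N k s₀ x : ℝ} (hN : 0 < N) (hk : 1 ≤ k) (hs0 : 0 < s₀) (hx : x < 1)
    (hle : s₀ ≤ 1 - x) (hx' : 0 < N ^ 2 / 4 * x * (1 - x) + N * x - (N - k + 1)) :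
    0 < N ^ 2 / 4 * s₀ * (1 - s₀) - N * s₀ + (k - 1) := by
  have h1 : 0 < s₀ * (N ^ 2 / 4 * x * (1 - x) + N * x - (N - k + 1)) := mul_pos hs0 hx'
  have h2 : 0 ≤ (k - 1) * (1 - x - s₀) := mul_nonneg (by linarith) (by linarith)
  have h3 : 0 ≤ N ^ 2 / 4 * s₀ * (1 - x) * (1 - x - s₀) :=
    mul_nonneg (mul_nonneg (by positivity) (by linarith)) (by linarith)
  have h4 : 0 < (1 - x) * (N ^ 2 / 4 * s₀ * (1 - s₀) - N * s₀ + (k - 1)) := by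
    linarith
  exact (mul_pos_iff_of_pos_left (by linarith)).1 h4

/-- The condition of `E_pos` at `x = (2j + 1)c` is concave in `j = N - k`. -/
lemma e_interp {N c j ja jb : ℝ} (ha : ja ≤ j) (hb : j ≤ jb) (hab : ja < jb)
    (pa : 0 < N ^ 2 / 4 * ((2 * ja + 1) * c) * (1 - (2 * ja + 1) * c)
      + N * ((2 * ja + 1) * c) - (ja + 1))
    (pb : 0 < N ^ 2 / 4 * ((2 * jb + 1) * c) * (1 - (2 * jb + 1) * c)
      + N * ((2 * jb + 1) * c) - (jb + 1)) :
    0 < N ^ 2 / 4 * ((2 * j + 1) * c) * (1 - (2 * j + 1) * c)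
      + N * ((2 * j + 1) * c) - (j + 1) := by
  have h3 : 0 ≤ N ^ 2 * c ^ 2 * (jb - ja) * ((j - ja) * (jb - j)) :=
    mul_nonneg (mul_nonneg (by positivity) (by linarith))
      (mul_nonneg (by linarith) (by linarith))
  have h4 : 0 < (jb - j) * (N ^ 2 / 4 * ((2 * ja + 1) * c) * (1 - (2 * ja + 1) * c)
      + N * ((2 * ja + 1) * c) - (ja + 1)) + (j - ja) * (N ^ 2 / 4 * ((2 * jb + 1) * c)
        * (1 - (2 * jb + 1) * c) + N * ((2 * jb + 1) * c) - (jb + 1)) := by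
    rcases ha.eq_or_lt with rfl | h
    · rw [sub_self, zero_mul, add_zero]; exact mul_pos (by linarith) pa
    · have := mul_nonneg (sub_nonneg.2 hb) pa.le
      have := mul_pos (sub_pos.2 h) pb
      linarith
  have h5 : 0 < (jb - ja) * (N ^ 2 / 4 * ((2 * j + 1) * c) * (1 - (2 * j + 1) * c)
      + N * ((2 * j + 1) * c) - (j + 1)) := by linarith
  exact (mul_pos_iff_of_pos_left (by linarith)).1 h5

/-- The inequality holds for all `k` with `ja ≤ N - k ≤ jb` once the condition of `E_pos`, taken at the
bound of `fzero_le`, holds for `j = ja` and `j = jb`. -/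
lemma generic_range {N k s₀ ja jb : ℝ} (hN : 0 < N) (hk : 1 ≤ k) (hs0 : 0 < s₀) (hs1 : s₀ < 1)
    (hpos : ∀ s ∈ Ico 0 s₀, 0 < hyp2F1 ((N + 1) / 2) (-1 / 2) (k / 2) s)
    (h0 : 0 ≤ ja) (ha : ja ≤ N - k) (hb : N - k ≤ jb) (hab : ja < jb)
    (pa : 0 < N ^ 2 / 4 * ((2 * ja + 1) * ((2 * N + 3) ^ 3 / (27 * (N + 1) ^ 4)))
        * (1 - (2 * ja + 1) * ((2 * N + 3) ^ 3 / (27 * (N + 1) ^ 4)))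
      + N * ((2 * ja + 1) * ((2 * N + 3) ^ 3 / (27 * (N + 1) ^ 4))) - (ja + 1))
    (pb : 0 < N ^ 2 / 4 * ((2 * jb + 1) * ((2 * N + 3) ^ 3 / (27 * (N + 1) ^ 4)))
        * (1 - (2 * jb + 1) * ((2 * N + 3) ^ 3 / (27 * (N + 1) ^ 4)))
      + N * ((2 * jb + 1) * ((2 * N + 3) ^ 3 / (27 * (N + 1) ^ 4))) - (jb + 1))
    {G₁ : ℝ} (hG : HasDerivAt (hyp2F1 (N / 4) (N / 4) (k / 2)) G₁ s₀) :
    (N * s₀ - (k - 1)) * hyp2F1 (N / 4) (N / 4) (k / 2) s₀ < 2 * s₀ * (1 - s₀) * G₁ := by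
  have hle := fzero_le (N := N) (k := k) (by linarith) (by linarith) hs0 hs1 hpos
  have := e_interp ha hb hab pa pb
  exact generic hN hk hs0 hs1 (E_pos hN hk hs0 (by linarith) hle this) hG

lemma large_N {N k s₀ : ℝ} (hN : 10 ≤ N) (hk : 1 ≤ k) (hkN : k ≤ N) (hs0 : 0 < s₀) (hs1 : s₀ < 1)
    (hpos : ∀ s ∈ Ico 0 s₀, 0 < hyp2F1 ((N + 1) / 2) (-1 / 2) (k / 2) s)
    {G₁ : ℝ} (hG : HasDerivAt (hyp2F1 (N / 4) (N / 4) (k / 2)) G₁ s₀) :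
    (N * s₀ - (k - 1)) * hyp2F1 (N / 4) (N / 4) (k / 2) s₀ < 2 * s₀ * (1 - s₀) * G₁ := by
  -- In terms of `m = N - 10`, both endpoint conditions become polynomials with positive coefficients
  -- after clearing denominators.
  obtain ⟨m, rfl⟩ : ∃ m, N = 10 + m := ⟨N - 10, by ring⟩
  have hm : 0 ≤ m := by linarith
  have hD : 0 < 4 * (27 * (10 + m + 1) ^ 4) ^ 2 := by positivity
  refine generic_range (ja := 0) (jb := 10 + m - 1) (by linarith) hk hs0 hs1 hpos le_rfl
    (by linarith) (by linarith) (by linarith) ?_ ?_ hG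
  · refine (mul_pos_iff_of_pos_left hD).1 ?_
    field_simp
    ring_nf
    positivity
  · refine (mul_pos_iff_of_pos_left hD).1 ?_
    field_simp
    ring_nf
    positivity

/-! ### The exceptional pairs `(N, k)` -/

/-- Barrier criterion with a polynomial lying above `N s - (k - 1)` on an interval `[0, s₁]` known to
contain `s₀`. -/
lemma exc {N k s₀ s₁ : ℝ} (hk : 0 < k) (hs0 : 0 < s₀) (hs1 : s₀ < 1) (hle : s₀ ≤ s₁)
    (A B C E : ℝ)
    (hρ : ∀ s ∈ Icc 0 s₁, 0 < N ^ 2 / 4 * (1 - s)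
      + (2 - k + (N - 2) * s) * (A + B * s + C * s ^ 2 + E * s ^ 3)
      - s * (A + B * s + C * s ^ 2 + E * s ^ 3) ^ 2
      - 2 * (1 - s) * (A + 2 * B * s + 3 * C * s ^ 2 + 4 * E * s ^ 3))
    (hχ : ∀ s ∈ Icc 0 s₁, N * s - (k - 1) ≤ A * s + B * s ^ 2 + C * s ^ 3 + E * s ^ 4)
    {G₁ : ℝ} (hG : HasDerivAt (hyp2F1 (N / 4) (N / 4) (k / 2)) G₁ s₀) :
    (N * s₀ - (k - 1)) * hyp2F1 (N / 4) (N / 4) (k / 2) s₀ < 2 * s₀ * (1 - s₀) * G₁ :=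
  (mul_le_mul_of_nonneg_right (hχ s₀ ⟨hs0.le, hle⟩)
    (hyp_pos _ (by positivity) hs0.le hs1).le).trans_lt
  (barrier hk hs0 hs1 A B C E (fun s hs => hρ s ⟨hs.1, hs.2.trans hle⟩) hG)

lemma bern_nonneg {a b s : ℝ} (ha : a ≤ s) (hb : s ≤ b) (i j : ℕ) :
    0 ≤ (s - a) ^ i * (b - s) ^ j :=
  mul_nonneg (pow_nonneg (sub_nonneg.2 ha) _) (pow_nonneg (sub_nonneg.2 hb) _)

lemma exc_5_1 {s₀ : ℝ} (hs0 : 0 < s₀) (hs1 : s₀ < 1)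
    (hz : hyp2F1 ((5 + 1) / 2) (-1 / 2) (1 / 2) s₀ = 0)
    {G₁ : ℝ} (hG : HasDerivAt (hyp2F1 (5 / 4) (5 / 4) (1 / 2)) G₁ s₀) :
    (5 * s₀ - (1 - 1)) * hyp2F1 (5 / 4) (5 / 4) (1 / 2) s₀ < 2 * s₀ * (1 - s₀) * G₁ := by
  have hle : s₀ ≤ 3/10 := by
    refine zero_le_of_partial_sum (N := 5) (k := 1) (by norm_num) (by norm_num) hs0 hs1
      (by norm_num) hz 3 ?_
    norm_num [Finset.sum_range_succ, hcoef_succ, hcoef_zero]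
  refine exc (N := 5) (k := 1) (by norm_num) hs0 hs1 hle (29/5) (-5/2) (0) (0)
    (fun s hs => ?_) (fun s hs => ?_) hG
  · have P := bern_nonneg hs.1 hs.2
    linarith [P 0 3, P 1 2, P 2 1, P 3 0]
  · have P := bern_nonneg hs.1 hs.2
    linarith [P 0 2, P 1 1, P 2 0]

lemma exc_5_2 {s₀ : ℝ} (hs0 : 0 < s₀) (hs1 : s₀ < 1)
    (hz : hyp2F1 ((5 + 1) / 2) (-1 / 2) (2 / 2) s₀ = 0)
    {G₁ : ℝ} (hG : HasDerivAt (hyp2F1 (5 / 4) (5 / 4) (2 / 2)) G₁ s₀) :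
    (5 * s₀ - (2 - 1)) * hyp2F1 (5 / 4) (5 / 4) (2 / 2) s₀ < 2 * s₀ * (1 - s₀) * G₁ := by
  have hle : s₀ ≤ 49/100 := by
    refine zero_le_of_partial_sum (N := 5) (k := 2) (by norm_num) (by norm_num) hs0 hs1
      (by norm_num) hz 5 ?_
    norm_num [Finset.sum_range_succ, hcoef_succ, hcoef_zero]
  refine exc (N := 5) (k := 2) (by norm_num) hs0 hs1 hle (31/10) (-1/10) (0) (0)
    (fun s hs => ?_) (fun s hs => ?_) hG
  · have P := bern_nonneg hs.1 hs.2
    linarith [P 0 3, P 1 2, P 2 1, P 3 0]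
  · have P := bern_nonneg hs.1 hs.2
    linarith [P 0 2, P 1 1, P 2 0]

lemma exc_5_3 {s₀ : ℝ} (hs0 : 0 < s₀) (hs1 : s₀ < 1)
    (hz : hyp2F1 ((5 + 1) / 2) (-1 / 2) (3 / 2) s₀ = 0)
    {G₁ : ℝ} (hG : HasDerivAt (hyp2F1 (5 / 4) (5 / 4) (3 / 2)) G₁ s₀) :
    (5 * s₀ - (3 - 1)) * hyp2F1 (5 / 4) (5 / 4) (3 / 2) s₀ < 2 * s₀ * (1 - s₀) * G₁ := by
  have hle : s₀ ≤ 33/50 := by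
    refine zero_le_of_partial_sum (N := 5) (k := 3) (by norm_num) (by norm_num) hs0 hs1
      (by norm_num) hz 7 ?_
    norm_num [Finset.sum_range_succ, hcoef_succ, hcoef_zero]
  refine exc (N := 5) (k := 3) (by norm_num) hs0 hs1 hle (41/20) (-1/10) (0) (0)
    (fun s hs => ?_) (fun s hs => ?_) hG
  · have P := bern_nonneg hs.1 hs.2
    linarith [P 0 3, P 1 2, P 2 1, P 3 0]
  · have P := bern_nonneg hs.1 hs.2
    linarith [P 0 2, P 1 1, P 2 0]

lemma exc_5_4 {s₀ : ℝ} (hs0 : 0 < s₀) (hs1 : s₀ < 1)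
    (hz : hyp2F1 ((5 + 1) / 2) (-1 / 2) (4 / 2) s₀ = 0)
    {G₁ : ℝ} (hG : HasDerivAt (hyp2F1 (5 / 4) (5 / 4) (4 / 2)) G₁ s₀) :
    (5 * s₀ - (4 - 1)) * hyp2F1 (5 / 4) (5 / 4) (4 / 2) s₀ < 2 * s₀ * (1 - s₀) * G₁ := by
  have hle : s₀ ≤ 81/100 := by
    refine zero_le_of_partial_sum (N := 5) (k := 4) (by norm_num) (by norm_num) hs0 hs1
      (by norm_num) hz 11 ?_
    norm_num [Finset.sum_range_succ, hcoef_succ, hcoef_zero]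
  refine exc (N := 5) (k := 4) (by norm_num) hs0 hs1 hle (67/50) (1/2) (-17/25) (0)
    (fun s hs => ?_) (fun s hs => ?_) hG
  · rcases le_total s (81/200) with h0 | h0
    · have P := bern_nonneg hs.1 h0
      linarith [P 0 5, P 1 4, P 2 3, P 3 2, P 4 1, P 5 0]
    · have P := bern_nonneg h0 hs.2
      linarith [P 0 5, P 1 4, P 2 3, P 3 2, P 4 1, P 5 0]
  · have P := bern_nonneg hs.1 hs.2
    linarith [P 0 3, P 1 2, P 2 1, P 3 0]

lemma exc_5_5 {s₀ : ℝ} (hs0 : 0 < s₀) (hs1 : s₀ < 1)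
    (hz : hyp2F1 ((5 + 1) / 2) (-1 / 2) (5 / 2) s₀ = 0)
    {G₁ : ℝ} (hG : HasDerivAt (hyp2F1 (5 / 4) (5 / 4) (5 / 2)) G₁ s₀) :
    (5 * s₀ - (5 - 1)) * hyp2F1 (5 / 4) (5 / 4) (5 / 2) s₀ < 2 * s₀ * (1 - s₀) * G₁ := by
  have hle : s₀ ≤ 116/125 := by
    refine zero_le_of_partial_sum (N := 5) (k := 5) (by norm_num) (by norm_num) hs0 hs1
      (by norm_num) hz 27 ?_
    norm_num [Finset.sum_range_succ, hcoef_succ, hcoef_zero]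
  refine exc (N := 5) (k := 5) (by norm_num) hs0 hs1 hle (1) (-53/50) (327/100) (-67/25)
    (fun s hs => ?_) (fun s hs => ?_) hG
  · rcases le_total s (58/125) with h0 | h0
    · have P := bern_nonneg hs.1 h0
      linarith [P 0 7, P 1 6, P 2 5, P 3 4, P 4 3, P 5 2, P 6 1, P 7 0]
    · rcases le_total s (87/125) with h1 | h1
      · have P := bern_nonneg h0 h1
        linarith [P 0 7, P 1 6, P 2 5, P 3 4, P 4 3, P 5 2, P 6 1, P 7 0]
      · have P := bern_nonneg h1 hs.2
        linarith [P 0 7, P 1 6, P 2 5, P 3 4, P 4 3, P 5 2, P 6 1, P 7 0]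
  · have P := bern_nonneg hs.1 hs.2
    linarith [P 0 4, P 1 3, P 2 2, P 3 1, P 4 0]

lemma exc_6_1 {s₀ : ℝ} (hs0 : 0 < s₀) (hs1 : s₀ < 1)
    (hpos : ∀ s ∈ Ico 0 s₀, 0 < hyp2F1 ((6 + 1) / 2) (-1 / 2) (1 / 2) s)
    {G₁ : ℝ} (hG : HasDerivAt (hyp2F1 (6 / 4) (6 / 4) (1 / 2)) G₁ s₀) :
    (6 * s₀ - (1 - 1)) * hyp2F1 (6 / 4) (6 / 4) (1 / 2) s₀ < 2 * s₀ * (1 - s₀) * G₁ := by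
  have hle : s₀ ≤ 43/100 := by
    refine (fzero_le (N := 6) (k := 1) (by norm_num) (by norm_num) hs0 hs1 hpos).trans ?_
    norm_num
  refine exc (N := 6) (k := 1) (by norm_num) hs0 hs1 hle (73/10) (-3) (0) (0)
    (fun s hs => ?_) (fun s hs => ?_) hG
  · have P := bern_nonneg hs.1 hs.2
    linarith [P 0 3, P 1 2, P 2 1, P 3 0]
  · have P := bern_nonneg hs.1 hs.2
    linarith [P 0 2, P 1 1, P 2 0]

lemma exc_6_6 {s₀ : ℝ} (hs0 : 0 < s₀) (hs1 : s₀ < 1)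
    (hpos : ∀ s ∈ Ico 0 s₀, 0 < hyp2F1 ((6 + 1) / 2) (-1 / 2) (6 / 2) s)
    {G₁ : ℝ} (hG : HasDerivAt (hyp2F1 (6 / 4) (6 / 4) (6 / 2)) G₁ s₀) :
    (6 * s₀ - (6 - 1)) * hyp2F1 (6 / 4) (6 / 4) (6 / 2) s₀ < 2 * s₀ * (1 - s₀) * G₁ := by
  have hle : s₀ ≤ 237/250 := by
    refine (fzero_le (N := 6) (k := 6) (by norm_num) (by norm_num) hs0 hs1 hpos).trans ?_
    norm_num
  refine exc (N := 6) (k := 6) (by norm_num) hs0 hs1 hle (-1343/1000) (2513/500) (-761/1000) (-2361/1000)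
    (fun s hs => ?_) (fun s hs => ?_) hG
  · rcases le_total s (237/500) with h0 | h0
    · have P := bern_nonneg hs.1 h0
      linarith [P 0 7, P 1 6, P 2 5, P 3 4, P 4 3, P 5 2, P 6 1, P 7 0]
    · rcases le_total s (711/1000) with h1 | h1
      · have P := bern_nonneg h0 h1
        linarith [P 0 7, P 1 6, P 2 5, P 3 4, P 4 3, P 5 2, P 6 1, P 7 0]
      · have P := bern_nonneg h1 hs.2
        linarith [P 0 7, P 1 6, P 2 5, P 3 4, P 4 3, P 5 2, P 6 1, P 7 0]
  · have P := bern_nonneg hs.1 hs.2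
    linarith [P 0 4, P 1 3, P 2 2, P 3 1, P 4 0]

lemma exc_7_7 {s₀ : ℝ} (hs0 : 0 < s₀) (hs1 : s₀ < 1)
    (hpos : ∀ s ∈ Ico 0 s₀, 0 < hyp2F1 ((7 + 1) / 2) (-1 / 2) (7 / 2) s)
    {G₁ : ℝ} (hG : HasDerivAt (hyp2F1 (7 / 4) (7 / 4) (7 / 2)) G₁ s₀) :
    (7 * s₀ - (7 - 1)) * hyp2F1 (7 / 4) (7 / 4) (7 / 2) s₀ < 2 * s₀ * (1 - s₀) * G₁ := by
  have hle : s₀ ≤ 239/250 := by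
    refine (fzero_le (N := 7) (k := 7) (by norm_num) (by norm_num) hs0 hs1 hpos).trans ?_
    norm_num
  refine exc (N := 7) (k := 7) (by norm_num) hs0 hs1 hle (-79/20) (273/20) (-183/20) (0)
    (fun s hs => ?_) (fun s hs => ?_) hG
  · rcases le_total s (239/500) with h0 | h0
    · have P := bern_nonneg hs.1 h0
      linarith [P 0 5, P 1 4, P 2 3, P 3 2, P 4 1, P 5 0]
    · rcases le_total s (717/1000) with h1 | h1
      · have P := bern_nonneg h0 h1
        linarith [P 0 5, P 1 4, P 2 3, P 3 2, P 4 1, P 5 0]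
      · have P := bern_nonneg h1 hs.2
        linarith [P 0 5, P 1 4, P 2 3, P 3 2, P 4 1, P 5 0]
  · have P := bern_nonneg hs.1 hs.2
    linarith [P 0 3, P 1 2, P 2 1, P 3 0]

lemma exc_8_8 {s₀ : ℝ} (hs0 : 0 < s₀) (hs1 : s₀ < 1)
    (hpos : ∀ s ∈ Ico 0 s₀, 0 < hyp2F1 ((8 + 1) / 2) (-1 / 2) (8 / 2) s)
    {G₁ : ℝ} (hG : HasDerivAt (hyp2F1 (8 / 4) (8 / 4) (8 / 2)) G₁ s₀) :
    (8 * s₀ - (8 - 1)) * hyp2F1 (8 / 4) (8 / 4) (8 / 2) s₀ < 2 * s₀ * (1 - s₀) * G₁ := by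
  have hle : s₀ ≤ 481/500 := by
    refine (fzero_le (N := 8) (k := 8) (by norm_num) (by norm_num) hs0 hs1 hpos).trans ?_
    norm_num
  refine exc (N := 8) (k := 8) (by norm_num) hs0 hs1 hle (-173/20) (124/5) (-78/5) (0)
    (fun s hs => ?_) (fun s hs => ?_) hG
  · rcases le_total s (481/1000) with h0 | h0
    · have P := bern_nonneg hs.1 h0
      linarith [P 0 5, P 1 4, P 2 3, P 3 2, P 4 1, P 5 0]
    · rcases le_total s (361/500) with h1 | h1
      · have P := bern_nonneg h0 h1
        linarith [P 0 5, P 1 4, P 2 3, P 3 2, P 4 1, P 5 0]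
      · have P := bern_nonneg h1 hs.2
        linarith [P 0 5, P 1 4, P 2 3, P 3 2, P 4 1, P 5 0]
  · have P := bern_nonneg hs.1 hs.2
    linarith [P 0 3, P 1 2, P 2 1, P 3 0]

lemma exc_9_9 {s₀ : ℝ} (hs0 : 0 < s₀) (hs1 : s₀ < 1)
    (hpos : ∀ s ∈ Ico 0 s₀, 0 < hyp2F1 ((9 + 1) / 2) (-1 / 2) (9 / 2) s)
    {G₁ : ℝ} (hG : HasDerivAt (hyp2F1 (9 / 4) (9 / 4) (9 / 2)) G₁ s₀) :
    (9 * s₀ - (9 - 1)) * hyp2F1 (9 / 4) (9 / 4) (9 / 2) s₀ < 2 * s₀ * (1 - s₀) * G₁ := by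
  have hle : s₀ ≤ 483/500 := by
    refine (fzero_le (N := 9) (k := 9) (by norm_num) (by norm_num) hs0 hs1 hpos).trans ?_
    norm_num
  refine exc (N := 9) (k := 9) (by norm_num) hs0 hs1 hle (-44/5) (132/5) (-171/10) (0)
    (fun s hs => ?_) (fun s hs => ?_) hG
  · rcases le_total s (483/1000) with h0 | h0
    · have P := bern_nonneg hs.1 h0
      linarith [P 0 5, P 1 4, P 2 3, P 3 2, P 4 1, P 5 0]
    · rcases le_total s (181/250) with h1 | h1
      · have P := bern_nonneg h0 h1
        linarith [P 0 5, P 1 4, P 2 3, P 3 2, P 4 1, P 5 0]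
      · have P := bern_nonneg h1 hs.2
        linarith [P 0 5, P 1 4, P 2 3, P 3 2, P 4 1, P 5 0]
  · have P := bern_nonneg hs.1 hs.2
    linarith [P 0 3, P 1 2, P 2 1, P 3 0]

/-! ### Assembly -/

/-- The inequality in the variable `s = t²`, with `N = n - 2`. -/
lemma core {N k : ℕ} (hN : 5 ≤ N) (hk : 1 ≤ k) (hkN : k ≤ N) {s₀ : ℝ} (hs0 : 0 < s₀) (hs1 : s₀ < 1)
    (hz : hyp2F1 (((N : ℝ) + 1) / 2) (-1 / 2) ((k : ℝ) / 2) s₀ = 0)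
    (hpos : ∀ s ∈ Ico 0 s₀, 0 < hyp2F1 (((N : ℝ) + 1) / 2) (-1 / 2) ((k : ℝ) / 2) s)
    {G₁ : ℝ} (hG : HasDerivAt (hyp2F1 ((N : ℝ) / 4) ((N : ℝ) / 4) ((k : ℝ) / 2)) G₁ s₀) :
    ((N : ℝ) * s₀ - ((k : ℝ) - 1)) * hyp2F1 ((N : ℝ) / 4) ((N : ℝ) / 4) ((k : ℝ) / 2) s₀
      < 2 * s₀ * (1 - s₀) * G₁ := by
  have hk' : (1 : ℝ) ≤ k := by exact_mod_cast hk
  have hkN' : (k : ℝ) ≤ N := by exact_mod_cast hkN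
  rcases le_or_gt 10 N with h | h
  · exact large_N (by exact_mod_cast h) hk' hkN' hs0 hs1 hpos hG
  by_cases hg : (N = 6 ∧ 2 ≤ k ∧ k ≤ 5) ∨ (7 ≤ N ∧ k + 1 ≤ N)
  · rcases hg with ⟨rfl, h2, h5⟩ | ⟨h7, h1⟩
    · have h2' : (2 : ℝ) ≤ k := by exact_mod_cast h2
      have h5' : (k : ℝ) ≤ 5 := by exact_mod_cast h5
      refine generic_range (ja := 1) (jb := 4) (by norm_num) hk' hs0 hs1 hpos ?_ ?_ ?_ ?_ ?_ ?_ hG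
      · norm_num
      · push_cast; linarith
      · push_cast; linarith
      · norm_num
      · norm_num
      · norm_num
    · have h1' : (k : ℝ) + 1 ≤ N := by exact_mod_cast h1
      have h7' : (7 : ℝ) ≤ N := by exact_mod_cast h7
      refine generic_range (ja := 1) (jb := N - 1) (by linarith) hk' hs0 hs1 hpos
        zero_le_one (by linarith) (by linarith) (by linarith) ?_ ?_ hG
      all_goals
        clear hG hpos hz hk' hkN' h1' h7'
        interval_cases N <;> norm_num
  · obtain ⟨h9, h6, h5⟩ : N < 10 ∧ (N = 6 → k = 1 ∨ k = 6) ∧ (7 ≤ N → k = N) := by omega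
    clear hk' hkN' hg
    interval_cases N
    · interval_cases k <;> simp only [Nat.cast_ofNat, Nat.cast_one] at hz hG ⊢
      · exact exc_5_1 hs0 hs1 hz hG
      · exact exc_5_2 hs0 hs1 hz hG
      · exact exc_5_3 hs0 hs1 hz hG
      · exact exc_5_4 hs0 hs1 hz hG
      · exact exc_5_5 hs0 hs1 hz hG
    · rcases h6 rfl with rfl | rfl <;> simp only [Nat.cast_ofNat, Nat.cast_one] at hpos hG ⊢
      · exact exc_6_1 hs0 hs1 hpos hG
      · exact exc_6_6 hs0 hs1 hpos hG
    · obtain rfl := h5 (by norm_num)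
      simp only [Nat.cast_ofNat] at hpos hG ⊢
      exact exc_7_7 hs0 hs1 hpos hG
    · obtain rfl := h5 (by norm_num)
      simp only [Nat.cast_ofNat] at hpos hG ⊢
      exact exc_8_8 hs0 hs1 hpos hG
    · obtain rfl := h5 (by norm_num)
      simp only [Nat.cast_ofNat] at hpos hG ⊢
      exact exc_9_9 hs0 hs1 hpos hG

lemma hyp_differentiable (a b : ℝ) {c : ℝ} (hc : 0 < c) {s : ℝ} (hs : |s| < 1) :
    ∃ u, HasDerivAt (hyp2F1 a b c) u s := by
  rw [hyp2F1_eq]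
  exact ⟨_, (hcoef_tame a b hc).hasDerivAt hs⟩

/-- Before its first zero `f` keeps the sign of `f(0) = 1`. -/
lemma pos_before_zero (a b : ℝ) {c s₀ : ℝ} (hc : 0 < c) (hs1 : s₀ < 1)
    (huniq : ∀ s ∈ Ioo 0 s₀, hyp2F1 a b c s ≠ 0) {s : ℝ} (hs : s ∈ Ico 0 s₀) :
    0 < hyp2F1 a b c s := by
  by_contra! hneg
  have hcont : ContinuousOn (hyp2F1 a b c) (Icc 0 s) := fun y hy => by
    obtain ⟨u, hu⟩ := hyp_differentiable a b hc (s := y)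
      (abs_lt.2 ⟨by linarith [hy.1], by linarith [hy.2, hs.2]⟩)
    exact hu.continuousAt.continuousWithinAt
  obtain ⟨y, hy, hy0⟩ := intermediate_value_Icc' hs.1 hcont
    (show (0 : ℝ) ∈ Icc _ _ from ⟨hneg, by rw [hyp_at_zero]; exact zero_le_one⟩)
  refine huniq y ⟨hy.1.lt_of_ne ?_, hy.2.trans_lt hs.2⟩ hy0
  rintro rfl
  rw [hyp_at_zero] at hy0
  exact one_ne_zero hy0

/-- For every `n ≥ 7` and `1 ≤ k ≤ n-2`, with `t₀` the unique zero of
`f_{n,k}` in `(0,1)` and `g(t) = ₂F₁((n-2)/4,(n-2)/4;k/2;t²)` (the case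
`α = (2-n)/2`), one has `g'(t₀)/g(t₀) > ((n-2)t₀ - (k-1)t₀⁻¹)/(1-t₀²)`, i.e.
`(2-n)/2 ∈ A_{n,k}`: the Caffarelli–Jerison–Kenig strict stability criterion holds
for the cone `U_{n,k}`. -/
theorem cjk_strict_stability_criterion
    (n k : ℕ) (hn : 7 ≤ n) (hk1 : 1 ≤ k) (hk2 : k ≤ n - 2)
    (t₀ : ℝ) (ht₀ : t₀ ∈ Set.Ioo (0 : ℝ) 1) (hzero : fnk n k t₀ = 0)
    (huniq : ∀ t ∈ Set.Ioo (0 : ℝ) 1, fnk n k t = 0 → t = t₀) :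
    deriv (gstab n k) t₀ / gstab n k t₀
      > (((n : ℝ) - 2) * t₀ - ((k : ℝ) - 1) * t₀⁻¹) / (1 - t₀ ^ 2) := by
  obtain ⟨N, rfl⟩ : ∃ N, n = N + 2 := ⟨n - 2, by omega⟩
  have e1 : (((N + 2 : ℕ) : ℝ) - 1) / 2 = ((N : ℝ) + 1) / 2 := by push_cast; ring
  have e2 : ((N + 2 : ℕ) : ℝ) - 2 = N := by push_cast; ring
  unfold fnk at hzero huniq
  unfold gstab
  rw [e1] at hzero huniq
  rw [e2]
  obtain ⟨ht0, ht1⟩ := ht₀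
  have hk0 : (0 : ℝ) < (k : ℝ) / 2 := by
    have : (0 : ℝ) < k := by exact_mod_cast hk1
    positivity
  have hs0 : 0 < t₀ ^ 2 := by positivity
  have hs1 : t₀ ^ 2 < 1 := by nlinarith
  have hpos : ∀ s ∈ Set.Ico 0 (t₀ ^ 2),
      0 < hyp2F1 (((N : ℝ) + 1) / 2) (-1 / 2) ((k : ℝ) / 2) s := by
    -- A zero `y < t₀²` of `f` would give the second zero `√y` in the variable `t`.
    refine fun s hs => pos_before_zero _ _ hk0 hs1 (fun y hy h0 => ?_) hs
    have hy1 : √y < 1 := by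
      rw [Real.sqrt_lt' one_pos]
      linarith [hy.2]
    have := huniq (√y) ⟨Real.sqrt_pos.2 hy.1, hy1⟩ (by rw [Real.sq_sqrt hy.1.le]; exact h0)
    rw [← this, Real.sq_sqrt hy.1.le] at hy
    exact lt_irrefl _ hy.2
  obtain ⟨G₁, hG⟩ := hyp_differentiable ((N : ℝ) / 4) ((N : ℝ) / 4) hk0 (s := t₀ ^ 2)
    (by rwa [abs_of_pos hs0])
  have hGp := hyp_pos ((N : ℝ) / 4) hk0 hs0.le hs1
  have key := core (by omega) hk1 (by omega) hs0 hs1 hzero hpos hG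
  have hd : HasDerivAt (fun t : ℝ => hyp2F1 ((N : ℝ) / 4) ((N : ℝ) / 4) ((k : ℝ) / 2) (t ^ 2))
      (G₁ * (2 * t₀)) t₀ := by
    have h2 : HasDerivAt (fun t : ℝ => t ^ 2) (2 * t₀) t₀ := by
      simpa using hasDerivAt_pow 2 t₀
    exact HasDerivAt.comp (h₂ := hyp2F1 _ _ _) (h := fun t : ℝ => t ^ 2) t₀ hG h2
  have hd' : deriv (fun t : ℝ => hyp2F1 ((N : ℝ) / 4) ((N : ℝ) / 4) ((k : ℝ) / 2) (t ^ 2)) t₀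
      = G₁ * (2 * t₀) := hd.deriv
  change _ < deriv (fun t : ℝ => hyp2F1 ((N : ℝ) / 4) ((N : ℝ) / 4) ((k : ℝ) / 2) (t ^ 2)) t₀ / _
  rw [hd', div_lt_div_iff₀ (by linarith) hGp]
  refine lt_of_mul_lt_mul_left ?_ ht0.le
  calc t₀ * (((N : ℝ) * t₀ - ((k : ℝ) - 1) * t₀⁻¹)
        * hyp2F1 ((N : ℝ) / 4) ((N : ℝ) / 4) ((k : ℝ) / 2) (t₀ ^ 2))
      = ((N : ℝ) * t₀ ^ 2 - ((k : ℝ) - 1))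
        * hyp2F1 ((N : ℝ) / 4) ((N : ℝ) / 4) ((k : ℝ) / 2) (t₀ ^ 2) := by
        field_simp
    _ < 2 * t₀ ^ 2 * (1 - t₀ ^ 2) * G₁ := key
    _ = t₀ * (G₁ * (2 * t₀) * (1 - t₀ ^ 2)) := by ring
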